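/- Let $N \ge 2$ and let $\nu$ be a positive Borel measure on $\mathbb{R}^N$ such that $\nu(B(x,r)) \le C_1 r^{N-1}$ for all $x \in \mathbb{R}^N$ and $r > 0$. Then for every $u \in C_c^\infty(\mathbb{R}^N)$ and every integer $m \ge 1$, $\int_{\mathbb{R}^N} |D^{m-1}u(x)|\, d\nu(x) \le C\, C_1\, \|D^m u\|_{L^1(\mathbb{R}^N)}$, where $D^k u$ denotes the collection of all $k$-th order partial derivatives and $C$ depends only on $N$ and $m$. -/

import Mathlib

open MeasureTheory Metric ENNReal

/-!
Let `g` be an upper gradient of `f` for a Haar measure `μ`. Integrating the variation of `f` over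
all segments joining `{f ≤ s}` to `{s + δ ≤ f}` inside a convex set `B`, and letting `δ → 0`, bounds
`μ (B ∩ {s < f}) * μ (B \ {s < f})` by the lower density at `s` of the image under `f` of `g dμ`
restricted to `B`: a relative isoperimetric inequality in which that density plays the role of the
perimeter of `{s < f}` in `B`. Around each point of `{s < f}` some ball is occupied by `{s < f}` in
a proportion bounded away from `0` and `1`; in such a ball the inequality bounds `μ (ball x r) / r`,
hence `ν (ball x (5 * r))`. A Vitali covering by such balls gives the boxing inequality: `ν {s < f}`
is at most a constant times the density at `s` of the image of `g dμ`. By Fatou's lemma the density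
of a measure on the line integrates to at most its total mass, so integrating over `s` proves the
trace inequality for `f`. It applies to `f = ‖D^{m-1} u‖`, for which `g = ‖D^m u‖` is an upper
gradient.
-/

open Set Filter
open scoped Topology NNReal
open Module (finrank)
open AffineMap (lineMap)

section LowerRightDensity

/-- The lower density of a measure on the line at `s`, from the right. For the image of
`g dμ` under `f` this is the perimeter-like quantity of the superlevel set `{s < f}` that appears
in the coarea formula. -/
noncomputable def lowerRightDensity (ρ : Measure ℝ) (s : ℝ) : ℝ≥0∞ :=
  liminf (fun δ : ℝ ↦ ρ (Icc s (s + δ)) / ENNReal.ofReal δ) (𝓝[>] 0)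

lemma lowerRightDensity_mono {ρ ρ' : Measure ℝ} (h : ρ ≤ ρ') (s : ℝ) :
    lowerRightDensity ρ s ≤ lowerRightDensity ρ' s :=
  liminf_le_liminf <| Eventually.of_forall fun _ ↦ ENNReal.div_le_div_right (h _) _

lemma tsum_lowerRightDensity_le {ι : Type*} (ρ : ι → Measure ℝ) (s : ℝ) :
    ∑' i, lowerRightDensity (ρ i) s ≤ lowerRightDensity (Measure.sum ρ) s := by
  let _ : MeasurableSpace ι := ⊤
  calc ∑' i, lowerRightDensity (ρ i) s
      = ∫⁻ i, lowerRightDensity (ρ i) s ∂Measure.count := (lintegral_count _).symm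
    _ ≤ liminf (fun δ : ℝ ↦ ∫⁻ i, ρ i (Icc s (s + δ)) / ENNReal.ofReal δ ∂Measure.count)
          (𝓝[>] 0) := lintegral_liminf_le fun _ ↦ measurable_from_top
    _ = lowerRightDensity (Measure.sum ρ) s := by
      simp only [lowerRightDensity, lintegral_count, Measure.sum_apply _ measurableSet_Icc,
        div_eq_mul_inv, ENNReal.tsum_mul_right]

variable (ρ : Measure ℝ) [SFinite ρ]

lemma measurableSet_setOf_mem_Icc_add (δ : ℝ) :
    MeasurableSet {p : ℝ × ℝ | p.2 ∈ Icc p.1 (p.1 + δ)} :=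
  (measurableSet_le measurable_fst measurable_snd).inter
    (measurableSet_le measurable_snd (measurable_fst.add_const δ))

lemma lintegral_measure_Icc_add (δ : ℝ) :
    ∫⁻ s, ρ (Icc s (s + δ)) = ENNReal.ofReal δ * ρ univ := by
  have hslice : ∀ t : ℝ, volume {s : ℝ | t ∈ Icc s (s + δ)} = ENNReal.ofReal δ := fun t ↦ by
    have : {s : ℝ | t ∈ Icc s (s + δ)} = Icc (t - δ) t := by
      ext s; simp only [mem_ofPred_eq, mem_Icc, sub_le_iff_le_add, and_comm]
    rw [this, Real.volume_Icc, _root_.sub_sub_cancel]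
  have hD := measurableSet_setOf_mem_Icc_add δ
  calc ∫⁻ s, ρ (Icc s (s + δ))
      = volume.prod ρ {p : ℝ × ℝ | p.2 ∈ Icc p.1 (p.1 + δ)} := (Measure.prod_apply hD).symm
    _ = ∫⁻ t, volume {s : ℝ | t ∈ Icc s (s + δ)} ∂ρ := Measure.prod_apply_symm hD
    _ = ENNReal.ofReal δ * ρ univ := by simp_rw [hslice, lintegral_const]

lemma lintegral_lowerRightDensity_le : ∫⁻ s, lowerRightDensity ρ s ≤ ρ univ := by
  have hmeas (δ : ℝ) : Measurable fun s ↦ ρ (Icc s (s + δ)) :=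
    measurable_measure_prodMk_left (measurableSet_setOf_mem_Icc_add δ)
  have hscale : ∀ᶠ δ : ℝ in 𝓝[>] 0,
      ∫⁻ s, ρ (Icc s (s + δ)) / ENNReal.ofReal δ = ρ univ := by
    filter_upwards [self_mem_nhdsWithin] with δ (hδ : 0 < δ)
    simp_rw [div_eq_mul_inv]
    rw [lintegral_mul_const _ (hmeas δ), lintegral_measure_Icc_add, ← div_eq_mul_inv,
      mul_comm, ENNReal.mul_div_cancel_right (by simpa using hδ) ofReal_ne_top]
  calc ∫⁻ s, lowerRightDensity ρ s
      ≤ liminf (fun δ : ℝ ↦ ∫⁻ s, ρ (Icc s (s + δ)) / ENNReal.ofReal δ) (𝓝[>] 0) :=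
        lintegral_liminf_le fun δ ↦ (hmeas δ).div_const _
    _ = ρ univ := by rw [liminf_congr hscale, liminf_const]

end LowerRightDensity

section Segments

variable {E : Type*} [NormedAddCommGroup E] [NormedSpace ℝ E] [MeasurableSpace E] [BorelSpace E]
  [FiniteDimensional ℝ E] (μ : Measure E) [μ.IsAddHaarMeasure] {B : Set E} {g : E → ℝ≥0∞}

lemma lintegral_comp_smul_add (hg : Measurable g) {c : ℝ} (hc : c ≠ 0) (a : E) :
    ∫⁻ x, g (c • x + a) ∂μ = ENNReal.ofReal |(c ^ finrank ℝ E)⁻¹| * ∫⁻ x, g x ∂μ := by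
  rw [← lintegral_map (f := fun y ↦ g (y + a)) (by fun_prop) (measurable_const_smul c),
    Measure.map_addHaar_smul μ hc, lintegral_smul_measure, lintegral_add_right_eq_self g a,
    smul_eq_mul]

lemma setLIntegral_comp_smul_add_le (hB : MeasurableSet B) (hg : Measurable g) {c : ℝ}
    (hc : 2⁻¹ ≤ c) {a : E} (hmaps : MapsTo (fun x ↦ c • x + a) B B) :
    ∫⁻ x in B, g (c • x + a) ∂μ ≤ 2 ^ finrank ℝ E * ∫⁻ x in B, g x ∂μ := by
  have hc0 : 0 < c := by linarith
  have hscale : |(c ^ finrank ℝ E)⁻¹| ≤ 2 ^ finrank ℝ E := by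
    rw [abs_of_pos (by positivity), ← inv_pow]
    gcongr
    exact inv_le_of_inv_le₀ two_pos hc
  calc ∫⁻ x in B, g (c • x + a) ∂μ
      = ∫⁻ x in B, B.indicator g (c • x + a) ∂μ :=
        setLIntegral_congr_fun hB fun x hx ↦ (indicator_of_mem (hmaps hx) g).symm
    _ ≤ ∫⁻ x, B.indicator g (c • x + a) ∂μ := setLIntegral_le_lintegral _ _
    _ = ENNReal.ofReal |(c ^ finrank ℝ E)⁻¹| * ∫⁻ x in B, g x ∂μ := by
      rw [lintegral_comp_smul_add μ (hg.indicator hB) hc0.ne', lintegral_indicator hB]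
    _ ≤ 2 ^ finrank ℝ E * ∫⁻ x in B, g x ∂μ := by
      gcongr
      exact ofReal_le_of_le_toReal (by simpa using hscale)

lemma lintegral_lintegral_lineMap_le_of_half_le (hconv : Convex ℝ B) (hB : MeasurableSet B)
    (hg : Measurable g) {t : ℝ} (ht : t ∈ Icc 2⁻¹ 1) :
    ∫⁻ x in B, ∫⁻ y in B, g (lineMap x y t) ∂μ ∂μ ≤
      2 ^ finrank ℝ E * μ B * ∫⁻ z in B, g z ∂μ := by
  have ht0 : t ∈ Icc (0 : ℝ) 1 := ⟨by linarith [ht.1], ht.2⟩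
  have hslice : ∀ x ∈ B,
      ∫⁻ y in B, g (lineMap x y t) ∂μ ≤ 2 ^ finrank ℝ E * ∫⁻ z in B, g z ∂μ := fun x hx ↦ by
    have hline (y : E) : lineMap x y t = t • y + (1 - t) • x := by
      rw [AffineMap.lineMap_apply_module, add_comm]
    simp_rw [hline]
    refine setLIntegral_comp_smul_add_le μ hB hg ht.1 fun y hy ↦ ?_
    simpa only [hline] using hconv.lineMap_mem hx hy ht0
  calc ∫⁻ x in B, ∫⁻ y in B, g (lineMap x y t) ∂μ ∂μ
      ≤ ∫⁻ _ in B, 2 ^ finrank ℝ E * ∫⁻ z in B, g z ∂μ ∂μ := setLIntegral_mono' hB hslice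
    _ = 2 ^ finrank ℝ E * μ B * ∫⁻ z in B, g z ∂μ := by rw [setLIntegral_const]; ring

lemma lintegral_lintegral_lineMap_le (hconv : Convex ℝ B) (hB : MeasurableSet B)
    (hg : Measurable g) {t : ℝ} (ht : t ∈ Icc 0 1) :
    ∫⁻ x in B, ∫⁻ y in B, g (lineMap x y t) ∂μ ∂μ ≤
      2 ^ finrank ℝ E * μ B * ∫⁻ z in B, g z ∂μ := by
  -- Exchanging `x` and `y` for `t ≤ 1 / 2` keeps the Jacobian of `y ↦ lineMap x y t` away from `0`.
  rcases le_total 2⁻¹ t with hle | hle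
  · exact lintegral_lintegral_lineMap_le_of_half_le μ hconv hB hg ⟨hle, ht.2⟩
  · have ht' : 1 - t ∈ Icc (2⁻¹ : ℝ) 1 := ⟨by linarith, by linarith [ht.1]⟩
    have hmeas : Measurable fun p : E × E ↦ g (lineMap p.1 p.2 t) := by
      refine hg.comp (Continuous.measurable ?_)
      simp only [AffineMap.lineMap_apply_module]
      fun_prop
    rw [lintegral_lintegral_swap hmeas.aemeasurable]
    simp_rw [← AffineMap.lineMap_apply_one_sub _ _ t]
    exact lintegral_lintegral_lineMap_le_of_half_le μ hconv hB hg ht'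

lemma lintegral_lintegral_lintegral_lineMap_le (hconv : Convex ℝ B) (hB : MeasurableSet B)
    (hg : Measurable g) :
    ∫⁻ x in B, ∫⁻ y in B, ∫⁻ t in Icc (0 : ℝ) 1, g (lineMap x y t) ∂volume ∂μ ∂μ ≤
      2 ^ finrank ℝ E * μ B * ∫⁻ z in B, g z ∂μ := by
  have hmeas : Measurable fun p : (E × ℝ) × E ↦ g (lineMap p.1.1 p.2 p.1.2) := by
    refine hg.comp (Continuous.measurable ?_)
    simp only [AffineMap.lineMap_apply_module]
    fun_prop
  calc ∫⁻ x in B, ∫⁻ y in B, ∫⁻ t in Icc (0 : ℝ) 1, g (lineMap x y t) ∂volume ∂μ ∂μ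
      = ∫⁻ x in B, ∫⁻ t in Icc (0 : ℝ) 1, ∫⁻ y in B, g (lineMap x y t) ∂μ ∂volume ∂μ := by
        refine lintegral_congr fun x ↦ (lintegral_lintegral_swap ?_).symm
        exact (hmeas.comp (measurable_prodMk_left.prodMap measurable_id)).aemeasurable
    _ = ∫⁻ t in Icc (0 : ℝ) 1, ∫⁻ x in B, ∫⁻ y in B, g (lineMap x y t) ∂μ ∂μ :=
        lintegral_lintegral_swap hmeas.lintegral_prod_right'.aemeasurable
    _ ≤ ∫⁻ _ in Icc (0 : ℝ) 1, 2 ^ finrank ℝ E * μ B * ∫⁻ z in B, g z ∂μ :=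
        setLIntegral_mono' measurableSet_Icc fun _ ↦
          lintegral_lintegral_lineMap_le μ hconv hB hg
    _ = 2 ^ finrank ℝ E * μ B * ∫⁻ z in B, g z ∂μ := by
        rw [setLIntegral_const, Real.volume_Icc, sub_zero, ofReal_one, mul_one]

end Segments

section UpperGradient

lemma exists_crossing_of_continuousOn {h : ℝ → ℝ} {p₀ q₀ a b : ℝ} (hpq : p₀ ≤ q₀)
    (hh : ContinuousOn h (Icc p₀ q₀)) (ha : h p₀ ≤ a) (hab : a ≤ b) (hb : b ≤ h q₀) :
    ∃ p q, p₀ ≤ p ∧ p ≤ q ∧ q ≤ q₀ ∧ h p = a ∧ h q = b ∧ MapsTo h (Icc p q) (Icc a b) := by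
  obtain ⟨q, ⟨hq, hhq⟩, hq_least⟩ : ∃ q, IsLeast (Icc p₀ q₀ ∩ h ⁻¹' {b}) q :=
    (isCompact_Icc.of_isClosed_subset (hh.preimage_isClosed_of_isClosed isClosed_Icc
      isClosed_singleton) inter_subset_left).exists_isLeast
      (intermediate_value_Icc hpq hh ⟨ha.trans hab, hb⟩)
  have hhq' : h q = b := hhq
  have hsub : Icc p₀ q ⊆ Icc p₀ q₀ := Icc_subset_Icc_right hq.2
  obtain ⟨p, ⟨hp, hhp⟩, hp_greatest⟩ : ∃ p, IsGreatest (Icc p₀ q ∩ h ⁻¹' {a}) p :=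
    (isCompact_Icc.of_isClosed_subset ((hh.mono hsub).preimage_isClosed_of_isClosed isClosed_Icc
      isClosed_singleton) inter_subset_left).exists_isGreatest
      (intermediate_value_Icc hq.1 (hh.mono hsub) ⟨ha, hab.trans hhq'.ge⟩)
  refine ⟨p, q, hp.1, hp.2, hq.2, hhp, hhq, fun t ht ↦ ⟨?_, ?_⟩⟩
  · by_contra! hlt
    obtain ⟨s, hs, hhs⟩ := intermediate_value_Icc ht.2
      (hh.mono (Icc_subset_Icc (hp.1.trans ht.1) hq.2)) ⟨hlt.le, hab.trans hhq'.ge⟩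
    have hsp : s ≤ p := hp_greatest ⟨⟨(hp.1.trans ht.1).trans hs.1, hs.2⟩, hhs⟩
    exact hlt.ne (le_antisymm (hs.1.trans hsp) ht.1 ▸ hhp)
  · by_contra! hlt
    obtain ⟨s, hs, hhs⟩ := intermediate_value_Icc (hp.1.trans ht.1)
      (hh.mono (Icc_subset_Icc_right (ht.2.trans hq.2))) ⟨ha.trans hab, hlt.le⟩
    have hqs : q ≤ s := hq_least ⟨⟨hs.1, hs.2.trans (ht.2.trans hq.2)⟩, hhs⟩
    exact hlt.ne' (le_antisymm ht.2 (hqs.trans hs.2) ▸ hhq)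

lemma map_restrict_withDensity_apply {X Y : Type*} [MeasurableSpace X] [MeasurableSpace Y]
    {μ : Measure X} {g : X → ℝ≥0∞} {f : X → Y} (hf : Measurable f) {T : Set Y}
    (hT : MeasurableSet T) {B : Set X} (hB : MeasurableSet B) :
    ((μ.withDensity g).restrict B).map f T = ∫⁻ z in B ∩ f ⁻¹' T, g z ∂μ := by
  rw [Measure.map_apply hf hT, Measure.restrict_apply (hf hT),
    withDensity_apply _ ((hf hT).inter hB), inter_comm]

lemma tendsto_measure_inter_preimage_Ici_add {X : Type*} [MeasurableSpace X] {μ : Measure X}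
    {B : Set X} (hB : MeasurableSet B) (hBfin : μ B ≠ ⊤) {f : X → ℝ} (hf : Measurable f) (s : ℝ) :
    Tendsto (fun δ : ℝ ↦ μ (B ∩ f ⁻¹' Ici (s + δ))) (𝓝[>] 0) (𝓝 (μ (B ∩ f ⁻¹' Ioi s))) := by
  refine tendsto_measure_of_tendsto_indicator _ (fun δ ↦ hB.inter (hf measurableSet_Ici)) hB hBfin
    (.of_forall fun _ ↦ inter_subset_left) fun x ↦ ?_
  suffices h : ∀ᶠ δ : ℝ in 𝓝[>] 0, s + δ ≤ f x ↔ s < f x by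
    filter_upwards [h] with δ hδ using and_congr_right fun _ ↦ hδ
  by_cases hx : s < f x
  · filter_upwards [Ioo_mem_nhdsGT (sub_pos.2 hx)] with δ hδ
    exact iff_of_true (by linarith [hδ.2]) hx
  · filter_upwards [self_mem_nhdsWithin] with δ (hδ : 0 < δ)
    exact iff_of_false (by linarith) hx

variable {E F : Type*} [NormedAddCommGroup E] [NormedSpace ℝ E]

/-- `g` is an upper gradient of `f` along line segments: the oscillation of `f` between two points
of a segment is at most the integral of `g` over the piece between them. Unlike `C¹` functions,
functions admitting such a `g` are stable under taking norms, so vector-valued maps need no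
separate treatment. -/
def IsSegmentUpperGradient (g : E → ℝ≥0∞) (f : E → ℝ) : Prop :=
  ∀ (x y : E) (p q : ℝ), p ≤ q →
    ‖f (lineMap x y q) - f (lineMap x y p)‖ₑ ≤
      ‖y - x‖ₑ * ∫⁻ t in Icc p q, g (lineMap x y t)

lemma isSegmentUpperGradient_norm [NormedAddCommGroup F] [NormedSpace ℝ F] {v : E → F}
    (hv : ContDiff ℝ 1 v) : IsSegmentUpperGradient (fun x ↦ ‖fderiv ℝ v x‖ₑ) fun x ↦ ‖v x‖ := by
  intro x y p q hpq
  have hderiv (t : ℝ) :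
      deriv (fun t ↦ v (lineMap x y t)) t = fderiv ℝ v (lineMap x y t) (y - x) :=
    ((hv.differentiable one_ne_zero _).hasFDerivAt.comp_hasDerivAt t
      AffineMap.hasDerivAt_lineMap).deriv
  have hpath : ContDiff ℝ 1 fun t : ℝ ↦ v (lineMap x y t) :=
    hv.comp (by simpa only [ContinuousAffineMap.coe_lineMap_eq] using
      (ContinuousAffineMap.lineMap (R := ℝ) x y).contDiff)
  calc ‖‖v (lineMap x y q)‖ - ‖v (lineMap x y p)‖‖ₑ
      ≤ ‖v (lineMap x y q) - v (lineMap x y p)‖ₑ :=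
        enorm_le_iff_norm_le.2 (abs_norm_sub_norm_le _ _)
    _ ≤ ∫⁻ t in Icc p q, ‖fderiv ℝ v (lineMap x y t) (y - x)‖ₑ := by
      simpa only [hderiv] using
        enorm_sub_le_lintegral_deriv_of_contDiffOn_Icc hpath.contDiffOn hpq
    _ ≤ ∫⁻ t in Icc p q, ‖y - x‖ₑ * ‖fderiv ℝ v (lineMap x y t)‖ₑ := by
      gcongr with t
      exact (ContinuousLinearMap.le_opENorm _ _).trans_eq (mul_comm _ _)
    _ = ‖y - x‖ₑ * ∫⁻ t in Icc p q, ‖fderiv ℝ v (lineMap x y t)‖ₑ :=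
      lintegral_const_mul' _ _ enorm_ne_top

namespace IsSegmentUpperGradient

variable {g : E → ℝ≥0∞} {f : E → ℝ}

lemma ofReal_sub_le_edist_mul (hg : IsSegmentUpperGradient g f) (hf : Continuous f) {a b : ℝ}
    (hab : a ≤ b) {x y : E} (hx : f x ≤ a) (hy : b ≤ f y) :
    ENNReal.ofReal (b - a) ≤
      edist x y * ∫⁻ t in Icc (0 : ℝ) 1, (f ⁻¹' Icc a b).indicator g (lineMap x y t) := by
  have hline : Continuous fun t : ℝ ↦ f (lineMap x y t) := hf.comp AffineMap.lineMap_continuous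
  obtain ⟨p, q, hp, hpq, hq, hfp, hfq, hmaps⟩ :=
    exists_crossing_of_continuousOn (zero_le_one' ℝ) hline.continuousOn (by simpa using hx) hab
      (by simpa using hy)
  calc ENNReal.ofReal (b - a)
      = ‖f (lineMap x y q) - f (lineMap x y p)‖ₑ := by
        rw [hfp, hfq, Real.enorm_of_nonneg (sub_nonneg.2 hab)]
    _ ≤ ‖y - x‖ₑ * ∫⁻ t in Icc p q, g (lineMap x y t) := hg x y p q hpq
    _ = edist x y * ∫⁻ t in Icc p q, (f ⁻¹' Icc a b).indicator g (lineMap x y t) := by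
      rw [edist_comm, edist_eq_enorm_sub]
      congr 1
      exact setLIntegral_congr_fun measurableSet_Icc fun t ht ↦
        (indicator_of_mem (s := f ⁻¹' Icc a b) (hmaps ht) g).symm
    _ ≤ edist x y * ∫⁻ t in Icc (0 : ℝ) 1, (f ⁻¹' Icc a b).indicator g (lineMap x y t) := by
      gcongr

variable [MeasurableSpace E] [BorelSpace E] [FiniteDimensional ℝ E] (μ : Measure E)
  [μ.IsAddHaarMeasure] {B : Set E}

lemma ofReal_sub_mul_measure_mul_measure_le (hg : IsSegmentUpperGradient g f)
    (hgm : Measurable g) (hf : Continuous f) (hconv : Convex ℝ B) (hB : MeasurableSet B)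
    (hbdd : Bornology.IsBounded B) {a b : ℝ} (hab : a ≤ b) :
    ENNReal.ofReal (b - a) * (μ (B ∩ f ⁻¹' Iic a) * μ (B ∩ f ⁻¹' Ici b)) ≤
      ediam B * (2 ^ finrank ℝ E * μ B * ∫⁻ z in B ∩ f ⁻¹' Icc a b, g z ∂μ) := by
  have hlow : MeasurableSet (f ⁻¹' Iic a) := hf.measurable measurableSet_Iic
  have hhigh : MeasurableSet (f ⁻¹' Ici b) := hf.measurable measurableSet_Ici
  have hband : MeasurableSet (f ⁻¹' Icc a b) := hf.measurable measurableSet_Icc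
  have hedist : ∀ x ∈ B ∩ f ⁻¹' Iic a, ∀ y ∈ B ∩ f ⁻¹' Ici b, ENNReal.ofReal (b - a) ≤
      ediam B * ∫⁻ t in Icc (0 : ℝ) 1, (f ⁻¹' Icc a b).indicator g (lineMap x y t) :=
    fun x hx y hy ↦ (hg.ofReal_sub_le_edist_mul hf hab hx.2 hy.2).trans <| by
      gcongr
      exact edist_le_ediam_of_mem hx.1 hy.1
  calc ENNReal.ofReal (b - a) * (μ (B ∩ f ⁻¹' Iic a) * μ (B ∩ f ⁻¹' Ici b))
      = ∫⁻ _ in B ∩ f ⁻¹' Iic a, ∫⁻ _ in B ∩ f ⁻¹' Ici b, ENNReal.ofReal (b - a) ∂μ ∂μ := by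
        simp_rw [setLIntegral_const]; ring
    _ ≤ ∫⁻ x in B ∩ f ⁻¹' Iic a, ∫⁻ y in B ∩ f ⁻¹' Ici b, ediam B *
          ∫⁻ t in Icc (0 : ℝ) 1, (f ⁻¹' Icc a b).indicator g (lineMap x y t) ∂volume ∂μ ∂μ :=
        setLIntegral_mono' (hB.inter hlow) fun x hx ↦
          setLIntegral_mono' (hB.inter hhigh) fun y hy ↦ hedist x hx y hy
    _ ≤ ∫⁻ x in B, ∫⁻ y in B, ediam B *
          ∫⁻ t in Icc (0 : ℝ) 1, (f ⁻¹' Icc a b).indicator g (lineMap x y t) ∂volume ∂μ ∂μ :=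
        (lintegral_mono_set inter_subset_left).trans
          (lintegral_mono fun _ ↦ lintegral_mono_set inter_subset_left)
    _ ≤ ediam B * (2 ^ finrank ℝ E * μ B * ∫⁻ z in B, (f ⁻¹' Icc a b).indicator g z ∂μ) := by
      simp_rw [lintegral_const_mul' _ _ hbdd.ediam_ne_top]
      gcongr
      exact lintegral_lintegral_lintegral_lineMap_le μ hconv hB (hgm.indicator hband)
    _ = ediam B * (2 ^ finrank ℝ E * μ B * ∫⁻ z in B ∩ f ⁻¹' Icc a b, g z ∂μ) := by
        rw [setLIntegral_indicator hband, inter_comm]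

lemma measure_inter_mul_measure_diff_le (hg : IsSegmentUpperGradient g f) (hgm : Measurable g)
    (hf : Continuous f) (hconv : Convex ℝ B) (hB : MeasurableSet B)
    (hbdd : Bornology.IsBounded B) (s : ℝ) :
    μ (B ∩ f ⁻¹' Ioi s) * μ (B \ f ⁻¹' Ioi s) ≤ ediam B * (2 ^ finrank ℝ E * μ B) *
      lowerRightDensity (((μ.withDensity g).restrict B).map f) s := by
  set ρ := ((μ.withDensity g).restrict B).map f with hρ
  have hBfin : μ B ≠ ⊤ := hbdd.measure_lt_top.ne
  have hdiam : ediam B ≠ ⊤ := hbdd.ediam_ne_top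
  have hband : ∀ᶠ δ : ℝ in 𝓝[>] 0, μ (B ∩ f ⁻¹' Ici (s + δ)) * μ (B ∩ f ⁻¹' Iic s) ≤
      ediam B * (2 ^ finrank ℝ E * μ B) * (ρ (Icc s (s + δ)) / ENNReal.ofReal δ) := by
    filter_upwards [self_mem_nhdsWithin] with δ (hδ : 0 < δ)
    have hδ0 : ENNReal.ofReal δ ≠ 0 := by simpa using hδ
    rw [← mul_div_assoc, ENNReal.le_div_iff_mul_le (.inl hδ0) (.inl ofReal_ne_top), hρ,
      map_restrict_withDensity_apply hf.measurable measurableSet_Icc hB]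
    calc μ (B ∩ f ⁻¹' Ici (s + δ)) * μ (B ∩ f ⁻¹' Iic s) * ENNReal.ofReal δ
        = ENNReal.ofReal (s + δ - s) * (μ (B ∩ f ⁻¹' Iic s) * μ (B ∩ f ⁻¹' Ici (s + δ))) := by
          rw [add_sub_cancel_left]; ring
      _ ≤ ediam B * (2 ^ finrank ℝ E * μ B * ∫⁻ z in B ∩ f ⁻¹' Icc s (s + δ), g z ∂μ) :=
          hg.ofReal_sub_mul_measure_mul_measure_le μ hgm hf hconv hB hbdd (by linarith)
      _ = _ := by ring
  have hlim : Tendsto (fun δ : ℝ ↦ μ (B ∩ f ⁻¹' Ici (s + δ)) * μ (B ∩ f ⁻¹' Iic s)) (𝓝[>] 0)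
      (𝓝 (μ (B ∩ f ⁻¹' Ioi s) * μ (B ∩ f ⁻¹' Iic s))) :=
    ENNReal.Tendsto.mul_const
      (tendsto_measure_inter_preimage_Ici_add hB hBfin hf.measurable s)
      (.inr (measure_ne_top_of_subset inter_subset_left hBfin))
  calc μ (B ∩ f ⁻¹' Ioi s) * μ (B \ f ⁻¹' Ioi s)
      = liminf (fun δ : ℝ ↦ μ (B ∩ f ⁻¹' Ici (s + δ)) * μ (B ∩ f ⁻¹' Iic s)) (𝓝[>] 0) := by
        rw [hlim.liminf_eq, sdiff_eq, ← preimage_compl, compl_Ioi]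
    _ ≤ liminf (fun δ : ℝ ↦ ediam B * (2 ^ finrank ℝ E * μ B) *
          (ρ (Icc s (s + δ)) / ENNReal.ofReal δ)) (𝓝[>] 0) := liminf_le_liminf hband
    _ = ediam B * (2 ^ finrank ℝ E * μ B) * lowerRightDensity ρ s :=
        ENNReal.liminf_const_mul_of_ne_top (by finiteness)

end IsSegmentUpperGradient

end UpperGradient

section BalancedBalls

variable {E : Type*} [NormedAddCommGroup E] [NormedSpace ℝ E] [MeasurableSpace E]

/-- A ball in which both `S` and its complement occupy at least a fixed proportion of the measure:
the balls with which the boxing inequality covers `S`. -/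
structure IsBalancedBall (μ : Measure E) (S : Set E) (x : E) (r : ℝ) : Prop where
  pos : 0 < r
  measure_le_inter : μ (ball x r) ≤ 2 ^ (finrank ℝ E + 1) * μ (ball x r ∩ S)
  measure_le_diff : μ (ball x r) ≤ 2 * μ (ball x r \ S)

variable [BorelSpace E] [FiniteDimensional ℝ E] {μ : Measure E} [μ.IsAddHaarMeasure] {S : Set E}

lemma measure_ball_mul {a : ℝ} (ha : 0 < a) (x : E) (r : ℝ) :
    μ (ball x (a * r)) = ENNReal.ofReal a ^ finrank ℝ E * μ (ball x r) := by
  rw [Measure.addHaar_ball_mul_of_pos μ x ha, Measure.addHaar_ball_center μ x, ofReal_pow ha.le]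

lemma isBalancedBall_two_mul {x : E} {r : ℝ} (hr : 0 < r) (hS : MeasurableSet S)
    (hle : μ (ball x r) ≤ 2 * μ (ball x r ∩ S))
    (hlt : 2 * μ (ball x (2 * r) ∩ S) < μ (ball x (2 * r))) :
    IsBalancedBall μ S x (2 * r) where
  pos := by positivity
  measure_le_inter := calc
    μ (ball x (2 * r)) = 2 ^ finrank ℝ E * μ (ball x r) := by
        rw [measure_ball_mul two_pos, ofReal_ofNat]
    _ ≤ 2 ^ finrank ℝ E * (2 * μ (ball x r ∩ S)) := by gcongr
    _ = 2 ^ (finrank ℝ E + 1) * μ (ball x r ∩ S) := by ring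
    _ ≤ 2 ^ (finrank ℝ E + 1) * μ (ball x (2 * r) ∩ S) := by gcongr; linarith
  measure_le_diff := by
    rw [← measure_inter_add_sdiff (ball x (2 * r)) hS, two_mul (μ _)] at hlt
    rw [← measure_inter_add_sdiff (ball x (2 * r)) hS, two_mul (μ _)]
    gcongr ?_ + _
    exact (lt_of_add_lt_add_left hlt).le

variable [Nontrivial E]

lemma exists_radius_bound_of_measure_ball_le (μ : Measure E) [μ.IsAddHaarMeasure] {c : ℝ≥0∞}
    (hc : c ≠ ⊤) : ∃ R, ∀ (x : E) (r : ℝ), μ (ball x r) ≤ c → r ≤ R := by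
  have _ := NormedSpace.noncompactSpace ℝ E
  have hlim : Tendsto (fun n : ℕ ↦ μ (ball 0 n)) atTop (𝓝 ⊤) := by
    have hmono : Monotone fun n : ℕ ↦ ball (0 : E) n := fun _ _ h ↦ ball_subset_ball (mod_cast h)
    simpa only [Function.comp_def, iUnion_ball_nat, measure_univ_of_isAddLeftInvariant] using
      tendsto_measure_iUnion_atTop (μ := μ) hmono
  obtain ⟨n, hn⟩ := (hlim.eventually_const_lt hc.lt_top).exists
  refine ⟨n, fun x r hr ↦ le_of_not_gt fun hnr ↦ hn.not_ge ?_⟩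
  calc μ (ball 0 n) ≤ μ (ball 0 r) := measure_mono (ball_subset_ball hnr.le)
    _ = μ (ball x r) := (Measure.addHaar_ball_center μ x r).symm
    _ ≤ c := hr

lemma exists_isBalancedBall (hS : IsOpen S) (hSfin : μ S ≠ ⊤) {x : E} (hx : x ∈ S) :
    ∃ r, IsBalancedBall μ S x r := by
  -- Double a radius at which `S` fills half of the ball and which is more than half the supremum.
  let A : Set ℝ := {r | 0 < r ∧ μ (ball x r) ≤ 2 * μ (ball x r ∩ S)}
  obtain ⟨ε, hε, hεS⟩ := isOpen_iff.1 hS x hx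
  have hεA : ε ∈ A :=
    ⟨hε, by rw [inter_eq_left.2 hεS, two_mul]; exact le_add_self⟩
  have hA : BddAbove A := by
    obtain ⟨R, hR⟩ := exists_radius_bound_of_measure_ball_le μ
      (mul_ne_top ofNat_ne_top hSfin : 2 * μ S ≠ ⊤)
    exact ⟨R, fun r hr ↦ hR x r (hr.2.trans (by gcongr; exact inter_subset_right))⟩
  have hsup : 0 < sSup A := hε.trans_le (le_csSup hA hεA)
  obtain ⟨r, ⟨hr, hle⟩, hlt⟩ := exists_lt_of_lt_csSup ⟨ε, hεA⟩ (half_lt_self hsup)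
  have hnotMem : 2 * r ∉ A := notMem_of_csSup_lt (by linarith) hA
  exact ⟨2 * r, isBalancedBall_two_mul hr hS.measurableSet hle <|
    lt_of_not_ge fun h ↦ hnotMem ⟨by positivity, h⟩⟩

lemma exists_countable_isBalancedBall_cover (hS : IsOpen S) (hSfin : μ S ≠ ⊤) :
    ∃ u : Set (E × ℝ), u.Countable ∧ u.PairwiseDisjoint (fun p ↦ ball p.1 p.2) ∧
      (∀ p ∈ u, IsBalancedBall μ S p.1 p.2) ∧ S ⊆ ⋃ p ∈ u, ball p.1 (5 * p.2) := by
  obtain ⟨R, hR⟩ := exists_radius_bound_of_measure_ball_le μ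
    (mul_ne_top (pow_ne_top ofNat_ne_top) hSfin : 2 ^ (finrank ℝ E + 1) * μ S ≠ ⊤)
  obtain ⟨u, hut, hdisj, hcover⟩ :=
    Vitali.exists_disjoint_subfamily_covering_enlargement_closedBall
      {p : E × ℝ | IsBalancedBall μ S p.1 p.2} Prod.fst Prod.snd R
      (fun p hp ↦ hR p.1 p.2 (hp.measure_le_inter.trans (by gcongr; exact inter_subset_right)))
      4 (by norm_num)
  have hdisj' : u.PairwiseDisjoint fun p ↦ ball p.1 p.2 := hdisj.mono fun _ ↦ ball_subset_closedBall
  refine ⟨u, hdisj'.countable_of_isOpen (fun _ _ ↦ isOpen_ball)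
    fun p hp ↦ nonempty_ball.2 (hut hp).pos, hdisj', hut, fun x hx ↦ ?_⟩
  obtain ⟨r, hr⟩ := exists_isBalancedBall hS hSfin hx
  obtain ⟨q, hqu, hq⟩ := hcover (x, r) hr
  have hxq : x ∈ closedBall q.1 (4 * q.2) := hq (mem_closedBall_self hr.pos.le)
  exact mem_biUnion hqu (closedBall_subset_ball (by linarith [(hut hqu).pos]) hxq)

end BalancedBalls

section Trace

variable {E F : Type*} [NormedAddCommGroup E] [NormedSpace ℝ E] [MeasurableSpace E]

/-- Upper Ahlfors regularity of codimension one, `ν (B(x, r)) ≤ c μ (B(x, r)) / r`, which for a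
Haar measure `μ` on a space of dimension `N` is the growth condition `ν (B(x, r)) ≤ C₁ r ^ (N - 1)`.
Multiplying out `r` avoids both division and the exponent `N - 1`. -/
def IsCodimOneRegular (μ ν : Measure E) (c : ℝ≥0) : Prop :=
  ∀ (x : E) (r : ℝ), 0 < r → ENNReal.ofReal r * ν (ball x r) ≤ c * μ (ball x r)

variable [BorelSpace E] [FiniteDimensional ℝ E] {μ ν : Measure E} [μ.IsAddHaarMeasure] {c : ℝ≥0}
  {g : E → ℝ≥0∞} {f : E → ℝ}

lemma IsBalancedBall.measure_ball_le {x : E} {r s : ℝ}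
    (hr : IsBalancedBall μ (f ⁻¹' Ioi s) x r) (hg : IsSegmentUpperGradient g f)
    (hgm : Measurable g) (hf : Continuous f) :
    μ (ball x r) ≤ ENNReal.ofReal r * 2 ^ (2 * finrank ℝ E + 3) *
      lowerRightDensity (((μ.withDensity g).restrict (ball x r)).map f) s := by
  set b := μ (ball x r)
  set P := lowerRightDensity (((μ.withDensity g).restrict (ball x r)).map f) s
  have hb0 : b ≠ 0 := (measure_ball_pos μ x hr.pos).ne'
  have hbfin : b ≠ ⊤ := measure_ball_lt_top.ne
  rw [← ENNReal.mul_le_mul_iff_left hb0 hbfin]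
  calc b * b
      ≤ 2 ^ (finrank ℝ E + 1) * μ (ball x r ∩ f ⁻¹' Ioi s) * (2 * μ (ball x r \ f ⁻¹' Ioi s)) :=
        mul_le_mul' hr.measure_le_inter hr.measure_le_diff
    _ = 2 ^ (finrank ℝ E + 2) * (μ (ball x r ∩ f ⁻¹' Ioi s) * μ (ball x r \ f ⁻¹' Ioi s)) := by ring
    _ ≤ 2 ^ (finrank ℝ E + 2) * (ediam (ball x r) * (2 ^ finrank ℝ E * b) * P) := by
        gcongr 2 ^ (finrank ℝ E + 2) * ?_
        exact hg.measure_inter_mul_measure_diff_le μ hgm hf (convex_ball x r) measurableSet_ball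
          isBounded_ball s
    _ ≤ 2 ^ (finrank ℝ E + 2) * (2 * ENNReal.ofReal r * (2 ^ finrank ℝ E * b) * P) := by
        gcongr
        rw [← eball_ofReal]
        exact ediam_eball_le
    _ = ENNReal.ofReal r * 2 ^ (2 * finrank ℝ E + 3) * P * b := by ring

lemma IsBalancedBall.measure_ball_five_mul_le {x : E} {r s : ℝ}
    (hr : IsBalancedBall μ (f ⁻¹' Ioi s) x r) (hν : IsCodimOneRegular μ ν c)
    (hg : IsSegmentUpperGradient g f) (hgm : Measurable g) (hf : Continuous f) :
    ν (ball x (5 * r)) ≤ c * (8 * 20 ^ finrank ℝ E) *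
      lowerRightDensity (((μ.withDensity g).restrict (ball x r)).map f) s := by
  set P := lowerRightDensity (((μ.withDensity g).restrict (ball x r)).map f) s
  have hr0 : ENNReal.ofReal r ≠ 0 := by simpa using hr.pos
  have h20 : (20 : ℝ≥0∞) ^ finrank ℝ E = 5 ^ finrank ℝ E * 2 ^ (2 * finrank ℝ E) := by
    rw [pow_mul, ← mul_pow]; norm_num
  rw [← ENNReal.mul_le_mul_iff_right hr0 ofReal_ne_top]
  calc ENNReal.ofReal r * ν (ball x (5 * r))
      ≤ ENNReal.ofReal (5 * r) * ν (ball x (5 * r)) := by gcongr; linarith [hr.pos]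
    _ ≤ c * μ (ball x (5 * r)) := hν x (5 * r) (by linarith [hr.pos])
    _ = c * (5 ^ finrank ℝ E * μ (ball x r)) := by rw [measure_ball_mul (by simp), ofReal_ofNat]
    _ ≤ c * (5 ^ finrank ℝ E * (ENNReal.ofReal r * 2 ^ (2 * finrank ℝ E + 3) * P)) := by
        gcongr
        exact hr.measure_ball_le hg hgm hf
    _ = ENNReal.ofReal r * (c * (8 * 20 ^ finrank ℝ E) * P) := by rw [h20]; ring

variable [Nontrivial E]

lemma IsCodimOneRegular.measure_preimage_Ioi_le_lowerRightDensity (hν : IsCodimOneRegular μ ν c)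
    (hg : IsSegmentUpperGradient g f) (hgm : Measurable g) (hf : Continuous f) {s : ℝ}
    (hs : μ (f ⁻¹' Ioi s) ≠ ⊤) :
    ν (f ⁻¹' Ioi s) ≤
      c * (8 * 20 ^ finrank ℝ E) * lowerRightDensity ((μ.withDensity g).map f) s := by
  obtain ⟨u, hu, hdisj, hbal, hcover⟩ :=
    exists_countable_isBalancedBall_cover (isOpen_Ioi.preimage hf) hs
  have _ := hu.to_subtype
  let ρ (p : u) : Measure ℝ := ((μ.withDensity g).restrict (ball p.1.1 p.1.2)).map f
  have hsum : Measure.sum ρ ≤ (μ.withDensity g).map f := by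
    have hdisj' : Pairwise (Function.onFun Disjoint fun p : u ↦ ball p.1.1 p.1.2) := fun p q hpq ↦
      hdisj p.2 q.2 (Subtype.coe_ne_coe.2 hpq)
    rw [← Measure.map_sum hf.aemeasurable,
      ← Measure.restrict_iUnion hdisj' fun _ ↦ measurableSet_ball]
    exact Measure.map_mono Measure.restrict_le_self hf.measurable
  calc ν (f ⁻¹' Ioi s)
      ≤ ν (⋃ p ∈ u, ball p.1 (5 * p.2)) := measure_mono hcover
    _ ≤ ∑' p : u, ν (ball p.1.1 (5 * p.1.2)) := measure_biUnion_le ν hu _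
    _ ≤ ∑' p : u, c * (8 * 20 ^ finrank ℝ E) * lowerRightDensity (ρ p) s :=
        ENNReal.tsum_le_tsum fun p ↦ (hbal p p.2).measure_ball_five_mul_le hν hg hgm hf
    _ = c * (8 * 20 ^ finrank ℝ E) * ∑' p : u, lowerRightDensity (ρ p) s := ENNReal.tsum_mul_left
    _ ≤ c * (8 * 20 ^ finrank ℝ E) * lowerRightDensity ((μ.withDensity g).map f) s := by
        gcongr
        exact (tsum_lowerRightDensity_le ρ s).trans (lowerRightDensity_mono hsum s)

lemma IsCodimOneRegular.lintegral_ofReal_le (hν : IsCodimOneRegular μ ν c)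
    (hg : IsSegmentUpperGradient g f) (hgm : Measurable g) (hf : Continuous f) (hf0 : 0 ≤ f)
    (hfin : ∀ s > 0, μ (f ⁻¹' Ioi s) ≠ ⊤) :
    ∫⁻ x, ENNReal.ofReal (f x) ∂ν ≤ c * (8 * 20 ^ finrank ℝ E) * ∫⁻ x, g x ∂μ := by
  calc ∫⁻ x, ENNReal.ofReal (f x) ∂ν
      = ∫⁻ s in Ioi 0, ν (f ⁻¹' Ioi s) :=
        lintegral_eq_lintegral_meas_lt ν (.of_forall hf0) hf.aemeasurable
    _ ≤ ∫⁻ s in Ioi 0,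
          c * (8 * 20 ^ finrank ℝ E) * lowerRightDensity ((μ.withDensity g).map f) s :=
        setLIntegral_mono' measurableSet_Ioi fun s hs ↦
          hν.measure_preimage_Ioi_le_lowerRightDensity hg hgm hf (hfin s hs)
    _ ≤ ∫⁻ s, c * (8 * 20 ^ finrank ℝ E) * lowerRightDensity ((μ.withDensity g).map f) s :=
        setLIntegral_le_lintegral _ _
    _ = c * (8 * 20 ^ finrank ℝ E) * ∫⁻ s, lowerRightDensity ((μ.withDensity g).map f) s :=
        lintegral_const_mul' _ _ (by finiteness)
    _ ≤ c * (8 * 20 ^ finrank ℝ E) * (μ.withDensity g).map f univ := by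
        gcongr
        exact lintegral_lowerRightDensity_le _
    _ = c * (8 * 20 ^ finrank ℝ E) * ∫⁻ x, g x ∂μ := by
        rw [Measure.map_apply hf.measurable .univ, preimage_univ, withDensity_apply _ .univ,
          setLIntegral_univ]

lemma IsCodimOneRegular.lintegral_enorm_le_lintegral_enorm_fderiv [NormedAddCommGroup F]
    [NormedSpace ℝ F] (hν : IsCodimOneRegular μ ν c) {v : E → F} (hv : ContDiff ℝ 1 v)
    (hsupp : HasCompactSupport v) :
    ∫⁻ x, ‖v x‖ₑ ∂ν ≤ c * (8 * 20 ^ finrank ℝ E) * ∫⁻ x, ‖fderiv ℝ v x‖ₑ ∂μ := by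
  have hfin : ∀ s > 0, μ ((fun x ↦ ‖v x‖) ⁻¹' Ioi s) ≠ ⊤ := fun s hs ↦ by
    refine measure_ne_top_of_subset (fun x hx ↦ subset_tsupport v fun h0 ↦ ?_)
      hsupp.isCompact.measure_ne_top
    exact (hs.trans hx).ne' (by simpa using h0)
  simpa only [ofReal_norm] using hν.lintegral_ofReal_le (isSegmentUpperGradient_norm hv)
    (hv.continuous_fderiv one_ne_zero).enorm.measurable hv.continuous.norm
    (fun _ ↦ norm_nonneg _) hfin

end Trace

section IteratedDerivatives

variable {E F : Type*} [NormedAddCommGroup E] [NormedSpace ℝ E] [MeasurableSpace E]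

/-- The constant `C` of the trace inequality when the reference Haar measure is `μ`; the division by
the measure of the unit ball turns `r ^ (N - 1)` into `μ (B(x, r)) / r`. -/
noncomputable def traceConst (μ : Measure E) : ℝ :=
  8 * 20 ^ finrank ℝ E / μ.real (ball 0 1)

variable [FiniteDimensional ℝ E] {μ ν : Measure E} [μ.IsAddHaarMeasure]

variable (μ) in
lemma measureReal_unitBall_pos : 0 < μ.real (ball 0 1) :=
  toReal_pos (measure_ball_pos μ 0 one_pos).ne' measure_ball_lt_top.ne

variable (μ) in
lemma traceConst_pos : 0 < traceConst μ :=
  div_pos (by positivity) (measureReal_unitBall_pos μ)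

variable [BorelSpace E]

lemma isCodimOneRegular_of_measure_ball_le {C₁ : ℝ}
    (hν : ∀ (x : E) (r : ℝ), 0 < r →
      ν (ball x r) ≤ ENNReal.ofReal (C₁ * r ^ ((finrank ℝ E : ℝ) - 1))) :
    IsCodimOneRegular μ ν (C₁ / μ.real (ball 0 1)).toNNReal := by
  intro x r hr
  have hκ := measureReal_unitBall_pos μ
  have hball : μ (ball x r) = ENNReal.ofReal (r ^ finrank ℝ E * μ.real (ball 0 1)) := by
    rw [ofReal_mul (by positivity), ofReal_measureReal measure_ball_lt_top.ne,
      ← Measure.addHaar_ball_mul_of_pos μ x hr, mul_one]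
  calc ENNReal.ofReal r * ν (ball x r)
      ≤ ENNReal.ofReal r * ENNReal.ofReal (C₁ * r ^ ((finrank ℝ E : ℝ) - 1)) := by
        gcongr
        exact hν x r hr
    _ = ENNReal.ofReal (C₁ / μ.real (ball 0 1) * (r ^ finrank ℝ E * μ.real (ball 0 1))) := by
        rw [← ofReal_mul hr.le, Real.rpow_sub_one hr.ne', Real.rpow_natCast]
        congr 1
        field_simp
    _ = (C₁ / μ.real (ball 0 1)).toNNReal * μ (ball x r) := by
        rw [hball, ofReal_mul' (by positivity), ENNReal.ofReal]

theorem stmt19_general [Nontrivial E] [NormedAddCommGroup F] [NormedSpace ℝ F] (k : ℕ) {C₁ : ℝ}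
    (hν : ∀ (x : E) (r : ℝ), 0 < r →
      ν (ball x r) ≤ ENNReal.ofReal (C₁ * r ^ ((finrank ℝ E : ℝ) - 1)))
    {u : E → F} (hu : ContDiff ℝ (k + 1 : ℕ) u) (hsupp : HasCompactSupport u) :
    ∫⁻ x, ENNReal.ofReal ‖iteratedFDeriv ℝ k u x‖ ∂ν ≤
      ENNReal.ofReal (traceConst μ * C₁ * ∫ x, ‖iteratedFDeriv ℝ (k + 1) u x‖ ∂μ) := by
  have hint : Integrable (fun x ↦ ‖iteratedFDeriv ℝ (k + 1) u x‖) μ :=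
    ((hu.continuous_iteratedFDeriv le_rfl).integrable_of_hasCompactSupport
      (hsupp.iteratedFDeriv (k + 1))).norm
  calc ∫⁻ x, ENNReal.ofReal ‖iteratedFDeriv ℝ k u x‖ ∂ν
      = ∫⁻ x, ‖iteratedFDeriv ℝ k u x‖ₑ ∂ν := by simp only [ofReal_norm]
    _ ≤ (C₁ / μ.real (ball 0 1)).toNNReal * (8 * 20 ^ finrank ℝ E) *
          ∫⁻ x, ‖fderiv ℝ (iteratedFDeriv ℝ k u) x‖ₑ ∂μ :=
        (isCodimOneRegular_of_measure_ball_le hν).lintegral_enorm_le_lintegral_enorm_fderiv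
          (hu.iteratedFDeriv_right (by norm_cast; omega)) (hsupp.iteratedFDeriv k)
    _ = ENNReal.ofReal (8 * 20 ^ finrank ℝ E) * ENNReal.ofReal (C₁ / μ.real (ball 0 1)) *
          ENNReal.ofReal (∫ x, ‖iteratedFDeriv ℝ (k + 1) u x‖ ∂μ) := by
        rw [ofReal_integral_eq_lintegral_ofReal hint (.of_forall fun _ ↦ norm_nonneg _)]
        simp only [← ofReal_norm, norm_fderiv_iteratedFDeriv]
        rw [mul_comm (ENNReal.ofReal _) (ENNReal.ofReal (C₁ / _)), ofReal_mul (by norm_num),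
          ofReal_pow (by norm_num), ofReal_ofNat, ofReal_ofNat, ENNReal.ofReal]
    _ = ENNReal.ofReal (traceConst μ * C₁ * ∫ x, ‖iteratedFDeriv ℝ (k + 1) u x‖ ∂μ) := by
        rw [← ofReal_mul (by positivity), ← ofReal_mul' (integral_nonneg fun _ ↦ norm_nonneg _),
          traceConst]
        congr 1
        ring

end IteratedDerivatives

/-- for `(N-1)`-Ahlfors regular `ν` the trace inequality
`∫ |D^{m-1} u| dν ≤ C C₁ ‖D^m u‖_{L¹}` holds for all `u ∈ C_c^∞(ℝ^N)`. -/
theorem stmt19 (N : ℕ) (hN : 2 ≤ N) (m : ℕ) (hm : 1 ≤ m) :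
    ∃ C : ℝ, 0 < C ∧
      ∀ (C₁ : ℝ) (ν : Measure (EuclideanSpace ℝ (Fin N))),
        (∀ (x : EuclideanSpace ℝ (Fin N)) (r : ℝ), 0 < r →
          ν (ball x r) ≤ ENNReal.ofReal (C₁ * r ^ ((N : ℝ) - 1))) →
        ∀ u : EuclideanSpace ℝ (Fin N) → ℝ, ContDiff ℝ (⊤ : ℕ∞) u → HasCompactSupport u →
          ∫⁻ x, ENNReal.ofReal ‖iteratedFDeriv ℝ (m - 1) u x‖ ∂ν ≤
            ENNReal.ofReal (C * C₁ * ∫ x, ‖iteratedFDeriv ℝ m u x‖) := by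
  obtain ⟨k, rfl⟩ := Nat.exists_eq_add_of_le' hm
  have : Nonempty (Fin N) := ⟨⟨0, by omega⟩⟩
  exact ⟨traceConst volume, traceConst_pos volume, fun C₁ ν hν u hu hsupp ↦
    stmt19_general k (by simpa only [finrank_euclideanSpace_fin] using hν)
      (contDiff_infty.1 hu (k + 1)) hsupp⟩
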